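/- Let α be a strongly continuous one-parameter isometric representation on a Banach space E, z ∈ ℂ, and C a subspace of D(α_z) such that C is dense in E and α_t(C) ⊆ C for every t ∈ ℝ. Then C is a core for α_z. -/

import Mathlib

open Complex MeasureTheory Filter Topology Set

noncomputable section

/-- The closed horizontal strip between the real axis and the line `Im = z.im`. -/
def hStrip (z : ℂ) : Set ℂ := {y : ℂ | y.im ∈ Set.uIcc 0 z.im}

/-- A strongly continuous one-parameter (contractive, hence isometric) representation. -/
structure IsOneParamRep {E : Type*} [NormedAddCommGroup E] [NormedSpace ℂ E]
    (α : ℝ → E →L[ℂ] E) : Prop where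
  map_add : ∀ s t : ℝ, α (s + t) = (α s).comp (α t)
  map_zero : α 0 = ContinuousLinearMap.id ℂ E
  norm_le : ∀ t : ℝ, ‖α t‖ ≤ 1
  strong_cont : ∀ a : E, Continuous fun t : ℝ => α t a

/-- `(a, b)` lies in the graph of the analytic continuation `α_z`:  there is a function `f`,
continuous on the strip `S(z)`, analytic in its interior, agreeing with `t ↦ α_t a` on `ℝ`,
with `f z = b`. -/
def HasContVal {E : Type*} [NormedAddCommGroup E] [NormedSpace ℂ E]
    (α : ℝ → E →L[ℂ] E) (z : ℂ) (a b : E) : Prop :=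
  ∃ f : ℂ → E, ContinuousOn f (hStrip z) ∧
    DifferentiableOn ℂ f (interior (hStrip z)) ∧
    (∀ t : ℝ, f t = α t a) ∧ f z = b

lemma hStrip_eq (z : ℂ) : hStrip z = im ⁻¹' Icc (min 0 z.im) (max 0 z.im) := rfl

lemma interior_hStrip (z : ℂ) :
    interior (hStrip z) = im ⁻¹' Ioo (min 0 z.im) (max 0 z.im) := by
  rw [hStrip_eq, interior_preimage_im, interior_Icc]

lemma isClosed_hStrip (z : ℂ) : IsClosed (hStrip z) :=
  isClosed_Icc.preimage continuous_im

lemma ofReal_mem_hStrip (z : ℂ) (t : ℝ) : (t : ℂ) ∈ hStrip z := by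
  simp [hStrip]

lemma self_mem_hStrip (z : ℂ) : z ∈ hStrip z := by
  simp [hStrip]

lemma add_ofReal_mem_hStrip {z w : ℂ} (hw : w ∈ hStrip z) (t : ℝ) : w + t ∈ hStrip z := by
  simpa [hStrip] using hw

lemma closure_interior_hStrip {z : ℂ} (hz : z.im ≠ 0) :
    closure (interior (hStrip z)) = hStrip z := by
  have h : min 0 z.im ≠ max 0 z.im := by
    rcases lt_or_gt_of_ne hz with h | h
    · rw [min_eq_right h.le, max_eq_left h.le]; exact hz
    · rw [min_eq_left h.le, max_eq_right h.le]; exact hz.symm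
  rw [interior_hStrip, closure_preimage_im, closure_Ioo h, hStrip_eq]

section Uniqueness

variable {E : Type*} [NormedAddCommGroup E] [NormedSpace ℂ E]

/-- A function holomorphic on a square and continuous up to its boundary, which vanishes on the
lower side of the square, vanishes at its centre: multiply the four rotations of the function and
apply the maximum principle. -/
lemma eq_zero_at_center_of_side {r : ℝ} (hr : 0 < r) {g : ℂ → ℂ}
    (hg : DiffContOnCl ℂ g (Ioo (-r) r ×ℂ Ioo (-r) r))
    {s : ℝ} (hs : |s| = r) (h0 : ∀ w : ℂ, w.im = s → g w = 0) : g 0 = 0 := by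
  set U : Set ℂ := Ioo (-r) r ×ℂ Ioo (-r) r with hU
  have rot : ∀ c : ℂ, MapsTo (fun w => c * w) U U →
      DiffContOnCl ℂ (fun w => g (c * w)) U := fun c hc =>
    hg.comp (Differentiable.diffContOnCl (by fun_prop)) hc
  have h1 := rot 1 (fun w hw => by simpa using hw)
  have h2 := rot I (fun w hw => by
    simp only [hU, mem_reProdIm, mem_Ioo] at hw ⊢
    simp only [I_mul_re, I_mul_im]
    grind)
  have h3 := rot (-1) (fun w hw => by
    simp only [hU, mem_reProdIm, mem_Ioo] at hw ⊢
    simp only [neg_mul, one_mul, neg_re, neg_im]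
    grind)
  have h4 := rot (-I) (fun w hw => by
    simp only [hU, mem_reProdIm, mem_Ioo] at hw ⊢
    simp only [neg_mul, neg_re, neg_im, I_mul_re, I_mul_im]
    grind)
  have hP := ((h1.smul h2).smul h3).smul h4
  have hb : Bornology.IsBounded U :=
    (Metric.isBounded_Ioo (-r) r).reProdIm (Metric.isBounded_Ioo (-r) r)
  have key := norm_le_of_forall_mem_frontier_norm_le hb hP (C := 0) (z := 0) (by
    intro w hw
    have hw' : w.im = r ∨ w.im = -r ∨ w.re = r ∨ w.re = -r := by
      rw [hU, frontier_reProdIm, frontier_Ioo (by linarith), mem_union, mem_reProdIm,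
        mem_reProdIm] at hw
      simp only [mem_insert_iff, mem_singleton_iff] at hw
      tauto
    have hs' : s = r ∨ s = -r := by
      rcases abs_cases s with h | h
      · left; linarith
      · right; linarith
    have hz : w.im = s ∨ w.re = s ∨ -w.im = s ∨ -w.re = s := by
      grind
    rw [norm_le_zero_iff]
    simp only [smul_eq_mul, mul_eq_zero]
    rcases hz with h | h | h | h
    · exact Or.inl (Or.inl (Or.inl (h0 _ (by simpa using h))))
    · exact Or.inl (Or.inl (Or.inr (h0 _ (by simpa using h))))
    · exact Or.inl (Or.inr (h0 _ (by simpa using h)))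
    · exact Or.inr (h0 _ (by simpa using h))) (subset_closure (by simp [hU, mem_reProdIm, hr]))
  rw [norm_le_zero_iff] at key
  simpa using key

/-- A function continuous on a closed strip and holomorphic inside it is determined by its
restriction to the real axis. -/
lemma eqOn_zero_of_eq_zero_on_real {z : ℂ} {g : ℂ → E} (hc : ContinuousOn g (hStrip z))
    (hd : DifferentiableOn ℂ g (interior (hStrip z))) (h0 : ∀ t : ℝ, g t = 0) :
    EqOn g 0 (hStrip z) := by
  by_cases hz : z.im = 0
  · intro w hw
    have hw0 : w.im = 0 := by simpa [hStrip, hz] using hw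
    have : w = (w.re : ℂ) := Complex.ext (by simp) (by simp [hw0])
    rw [this]
    exact h0 _
  have near : ∀ c : ℂ, 2 * c.im ∈ Ioo (min 0 z.im) (max 0 z.im) → g c = 0 := by
    intro c hcim
    have hc0 : c.im ≠ 0 := by
      rintro h
      rw [h, mem_Ioo] at hcim
      rcases le_total 0 z.im with h' | h' <;> simp [h'] at hcim
    refine SeparatingDual.eq_zero_of_forall_dual_eq_zero (R := ℂ) fun φ => ?_
    have hdc : DiffContOnCl ℂ g (interior (hStrip z)) :=
      ⟨hd, hc.mono (closure_minimal interior_subset (isClosed_hStrip z))⟩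
    have hcomp : DiffContOnCl ℂ (fun w => φ (g (c + w)))
        (Ioo (-|c.im|) |c.im| ×ℂ Ioo (-|c.im|) |c.im|) := by
      refine φ.differentiable.comp_diffContOnCl
        (hdc.comp (g := fun w => c + w) (Differentiable.diffContOnCl (by fun_prop)) ?_)
      intro w hw
      rw [interior_hStrip, mem_preimage, add_im]
      rw [mem_reProdIm] at hw
      have hw2 := hw.2
      rw [mem_Ioo] at hw2 hcim ⊢
      grind
    have := eq_zero_at_center_of_side (abs_pos.2 hc0) hcomp (s := -c.im) (abs_neg _)
      (fun w hw => by
        have : c + w = ((c + w).re : ℂ) := Complex.ext (by simp) (by simp [hw])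
        rw [this, h0, map_zero])
    simpa using this
  have hint : EqOn g 0 (interior (hStrip z)) := by
    have hpre : IsPreconnected (interior (hStrip z)) := by
      rw [interior_hStrip]
      exact ((convex_Ioo _ _).linear_preimage imLm).isPreconnected
    have hcim : 2 * ((z.im / 4 : ℝ) * I : ℂ).im ∈ Ioo (min 0 z.im) (max 0 z.im) := by
      rw [mem_Ioo]; simp only [mul_im, ofReal_re, ofReal_im, I_im, I_re]
      grind
    let F' := UniformSpace.Completion E
    let e : E →L[ℂ] F' := UniformSpace.Completion.toComplL
    have han : AnalyticOnNhd ℂ (fun w => e (g w)) (interior (hStrip z)) :=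
      (e.differentiable.comp_differentiableOn hd).analyticOnNhd isOpen_interior
    have hev : (fun w => e (g w)) =ᶠ[𝓝 ((z.im / 4 : ℝ) * I : ℂ)] 0 := by
      have ho : IsOpen {c : ℂ | 2 * c.im ∈ Ioo (min 0 z.im) (max 0 z.im)} :=
        isOpen_Ioo.preimage (by fun_prop)
      filter_upwards [ho.mem_nhds hcim] with c hc
      simp [near c hc]
    have hE := han.eqOn_zero_of_preconnected_of_eventuallyEq_zero hpre (by
      rw [interior_hStrip, mem_preimage, mem_Ioo]
      rw [mem_Ioo] at hcim
      grind) hev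
    intro w hw
    exact UniformSpace.Completion.coe_injective E ((hE hw).trans (UniformSpace.Completion.coe_zero).symm)
  exact hint.of_subset_closure hc continuousOn_const interior_subset
    (closure_interior_hStrip hz).ge

lemma eqOn_of_eq_on_real {z : ℂ} {f g : ℂ → E} (hf : ContinuousOn f (hStrip z))
    (hfd : DifferentiableOn ℂ f (interior (hStrip z))) (hg : ContinuousOn g (hStrip z))
    (hgd : DifferentiableOn ℂ g (interior (hStrip z))) (h : ∀ t : ℝ, f t = g t) :
    EqOn f g (hStrip z) := fun _ hw =>
  sub_eq_zero.1 (eqOn_zero_of_eq_zero_on_real (hf.sub hg) (hfd.sub hgd)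
    (fun t => sub_eq_zero.2 (h t)) hw)

end Uniqueness

section Graph

variable {E : Type*} [NormedAddCommGroup E] [NormedSpace ℂ E] {α : ℝ → E →L[ℂ] E}

lemma IsOneParamRep.norm_apply_le (hα : IsOneParamRep α) (t : ℝ) (x : E) : ‖α t x‖ ≤ ‖x‖ :=
  ((α t).le_of_opNorm_le (hα.norm_le t) x).trans_eq (one_mul _)

lemma IsOneParamRep.apply_apply (hα : IsOneParamRep α) (s t : ℝ) (x : E) :
    α s (α t x) = α (s + t) x := by
  rw [hα.map_add]; rfl

lemma IsOneParamRep.extension_add (hα : IsOneParamRep α) {z : ℂ} {a : E} {f : ℂ → E}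
    (hc : ContinuousOn f (hStrip z)) (hd : DifferentiableOn ℂ f (interior (hStrip z)))
    (hf : ∀ t : ℝ, f t = α t a) (s : ℝ) {w : ℂ} (hw : w ∈ hStrip z) :
    f (w + s) = α s (f w) := by
  refine eqOn_of_eq_on_real (f := fun w => f (w + s)) (g := fun w => α s (f w)) ?_ ?_
    ((α s).continuous.comp_continuousOn hc) ((α s).differentiable.comp_differentiableOn hd) ?_ hw
  · exact hc.comp (by fun_prop) fun _ hw => add_ofReal_mem_hStrip hw s
  · refine hd.comp (by fun_prop) fun w hw => ?_
    rw [interior_hStrip] at hw ⊢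
    simpa using hw
  · intro t
    rw [← ofReal_add, hf, hf, hα.apply_apply, add_comm]

/-- The three lines bound for the analytic continuation of an orbit. -/
lemma IsOneParamRep.norm_extension_le (hα : IsOneParamRep α) {z : ℂ} {a : E} {f : ℂ → E}
    (hc : ContinuousOn f (hStrip z)) (hd : DifferentiableOn ℂ f (interior (hStrip z)))
    (hf : ∀ t : ℝ, f t = α t a) {w : ℂ} (hw : w ∈ hStrip z) :
    ‖f w‖ ≤ max ‖a‖ ‖f z‖ := by
  have hreal : ∀ w : ℂ, w.im = 0 → ‖f w‖ ≤ max ‖a‖ ‖f z‖ := by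
    intro w hw
    have : w = (w.re : ℂ) := Complex.ext (by simp) (by simp [hw])
    rw [this, hf]
    exact (hα.norm_apply_le _ _).trans (le_max_left _ _)
  have htop : ∀ w : ℂ, w.im = z.im → ‖f w‖ ≤ max ‖a‖ ‖f z‖ := by
    intro w hw
    have : w = z + ((w.re - z.re : ℝ) : ℂ) := Complex.ext (by simp) (by simp [hw])
    rw [this, hα.extension_add hc hd hf _ (self_mem_hStrip z)]
    exact (hα.norm_apply_le _ _).trans (le_max_right _ _)
  by_cases hz : z.im = 0
  · exact hreal w (by simpa [hStrip, hz] using hw)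
  have hlt : min 0 z.im < max 0 z.im := min_lt_max.2 (Ne.symm hz)
  obtain ⟨M, hM⟩ : ∃ M, ∀ y ∈ Icc (min 0 z.im) (max 0 z.im), ‖f (y * I)‖ ≤ M := by
    refine isCompact_Icc.exists_bound_of_continuousOn (f := fun y : ℝ => f (y * I)) ?_
    exact hc.comp (by fun_prop) fun y hy => by simpa [hStrip_eq] using hy
  have hbdd : ∀ w ∈ hStrip z, ‖f w‖ ≤ M := by
    intro w hw
    have hw' : (w.im * I : ℂ) ∈ hStrip z := by simpa [hStrip] using hw
    have : w = (w.im * I : ℂ) + (w.re : ℂ) := Complex.ext (by simp) (by simp)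
    rw [this, hα.extension_add hc hd hf _ hw']
    exact (hα.norm_apply_le _ _).trans (hM _ hw)
  have hside : ∀ y : ℝ, y = 0 ∨ y = z.im → ∀ w : ℂ, w.im = y → ‖f w‖ ≤ max ‖a‖ ‖f z‖ := by
    rintro y (rfl | rfl)
    · exact hreal
    · exact htop
  rw [interior_hStrip] at hd
  refine PhragmenLindelof.horizontal_strip (a := min 0 z.im) (b := max 0 z.im)
    ⟨hd, ?_⟩ ⟨0, ?_, 0, ?_⟩ (hside _ (min_choice _ _)) (hside _ (max_choice _ _)) hw.1 hw.2
  · rwa [closure_preimage_im, closure_Ioo hlt.ne]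
  · exact div_pos Real.pi_pos (sub_pos.2 hlt)
  · refine Asymptotics.IsBigO.of_bound M ?_
    refine mem_inf_of_right (mem_principal.2 fun w hw => ?_)
    have := hbdd w ⟨hw.1.le, hw.2.le⟩
    simpa using this

lemma HasContVal.add {z : ℂ} {a b a' b' : E} (h : HasContVal α z a b)
    (h' : HasContVal α z a' b') : HasContVal α z (a + a') (b + b') := by
  obtain ⟨f, hc, hd, hf, rfl⟩ := h
  obtain ⟨g, hc', hd', hg, rfl⟩ := h'
  exact ⟨f + g, hc.add hc', hd.add hd', fun t => by simp [hf, hg], rfl⟩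

lemma HasContVal.map (T : E →L[ℂ] E) (hT : ∀ t x, T (α t x) = α t (T x)) {z : ℂ} {a b : E}
    (h : HasContVal α z a b) : HasContVal α z (T a) (T b) := by
  obtain ⟨f, hc, hd, hf, rfl⟩ := h
  exact ⟨fun w => T (f w), T.continuous.comp_continuousOn hc,
    T.differentiable.comp_differentiableOn hd, fun t => by simp [hf, hT], rfl⟩

lemma HasContVal.smul {z : ℂ} {a b : E} (c : ℂ) (h : HasContVal α z a b) :
    HasContVal α z (c • a) (c • b) :=
  h.map (c • ContinuousLinearMap.id ℂ E) (by simp)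

lemma HasContVal.zero (z : ℂ) : HasContVal α z 0 0 :=
  ⟨0, continuousOn_const, differentiableOn_const 0, by simp, rfl⟩

lemma IsOneParamRep.isClosed_graph [CompleteSpace E] (hα : IsOneParamRep α) (z : ℂ) :
    IsClosed {p : E × E | HasContVal α z p.1 p.2} := by
  refine IsSeqClosed.isClosed fun p q hp hq => ?_
  choose f hc hd hf hfz using hp
  have hdiff : ∀ m n, ∀ w ∈ hStrip z, dist (f m w) (f n w) ≤ dist (p m) (p n) := by
    intro m n w hw
    have := hα.norm_extension_le (a := (p m).1 - (p n).1) ((hc m).sub (hc n))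
      ((hd m).sub (hd n)) (fun t => by simp [hf]) hw
    rw [Prod.dist_eq]
    simpa [dist_eq_norm, hfz] using this
  have hcs : CauchySeq p := hq.cauchySeq
  have hU : UniformCauchySeqOn f atTop (hStrip z) := by
    rw [Metric.uniformCauchySeqOn_iff]
    intro ε hε
    obtain ⟨N, hN⟩ := Metric.cauchySeq_iff.1 hcs ε hε
    exact ⟨N, fun m hm n hn w hw => (hdiff m n w hw).trans_lt (hN m hm n hn)⟩
  have hlim : ∀ w, ∃ L, w ∈ hStrip z → Tendsto (fun n => f n w) atTop (𝓝 L) := by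
    intro w
    by_cases hw : w ∈ hStrip z
    · obtain ⟨L, hL⟩ := cauchySeq_tendsto_of_complete (hU.cauchySeq hw)
      exact ⟨L, fun _ => hL⟩
    · exact ⟨0, fun h => absurd h hw⟩
  choose F hF using hlim
  have hT : TendstoUniformlyOn f F atTop (hStrip z) := hU.tendstoUniformlyOn_of_tendsto hF
  refine ⟨F, hT.continuousOn (Frequently.of_forall hc), ?_, fun t => ?_, ?_⟩
  · exact (hT.mono interior_subset).tendstoLocallyUniformlyOn.differentiableOn
      (Eventually.of_forall hd) isOpen_interior
  · refine tendsto_nhds_unique (hF t (ofReal_mem_hStrip z t)) ?_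
    simp only [hf]
    exact ((α t).continuous.tendsto _).comp ((continuous_fst.tendsto q).comp hq)
  · refine tendsto_nhds_unique (hF z (self_mem_hStrip z)) ?_
    simp only [hfz]
    exact (continuous_snd.tendsto q).comp hq

end Graph

section Smearing

lemma norm_gaussKernel (w : ℂ) (t : ℝ) :
    ‖cexp (-((t : ℂ) - w) ^ 2)‖ = Real.exp (w.im ^ 2) * Real.exp (-1 * (t - w.re) ^ 2) := by
  rw [norm_exp, ← Real.exp_add]
  congr 1
  simp [pow_two]
  ring

lemma integrable_gaussKernel (w : ℂ) : Integrable fun t : ℝ => cexp (-((t : ℂ) - w) ^ 2) := by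
  refine Integrable.mono' (((integrable_exp_neg_mul_sq one_pos).comp_sub_right w.re).const_mul
    (Real.exp (w.im ^ 2))) (by fun_prop) (ae_of_all _ fun t => (norm_gaussKernel w t).le)

lemma integrable_gaussKernel_deriv_bound (u K : ℝ) : Integrable fun t : ℝ =>
    2 * (|t - u| + K) * (Real.exp (1 + K ^ 2) * Real.exp (-(1 / 2) * (t - u) ^ 2)) := by
  have h2 : (0 : ℝ) < 1 / 2 := by norm_num
  have h : Integrable fun t : ℝ =>
      2 * (|t| + K) * (Real.exp (1 + K ^ 2) * Real.exp (-(1 / 2) * t ^ 2)) := by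
    have i1 := ((integrable_mul_exp_neg_mul_sq h2).norm).const_mul (2 * Real.exp (1 + K ^ 2))
    have i2 := (integrable_exp_neg_mul_sq h2).const_mul (2 * K * Real.exp (1 + K ^ 2))
    refine (i1.add i2).congr (ae_of_all _ fun t => ?_)
    simp only [Pi.add_apply, norm_mul, Real.norm_eq_abs, Real.abs_exp]
    ring
  exact h.comp_sub_right u

lemma norm_gaussKernel_deriv_le {w₀ w : ℂ} (hw : ‖w - w₀‖ ≤ 1) (t : ℝ) :
    ‖2 * ((t : ℂ) - w) * cexp (-((t : ℂ) - w) ^ 2)‖ ≤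
      2 * (|t - w₀.re| + (|w₀.im| + 2)) * (Real.exp (1 + (|w₀.im| + 2) ^ 2) *
        Real.exp (-(1 / 2) * (t - w₀.re) ^ 2)) := by
  have hre : |w.re - w₀.re| ≤ 1 := (abs_re_le_norm (w - w₀)).trans hw
  have him : |w.im - w₀.im| ≤ 1 := (abs_im_le_norm (w - w₀)).trans hw
  have him' : |w.im| ≤ |w₀.im| + 2 := by
    have := abs_add_le (w.im - w₀.im) w₀.im
    rw [sub_add_cancel] at this
    linarith
  rw [norm_mul, norm_mul, norm_gaussKernel]
  refine mul_le_mul ?_ ?_ (by positivity) (by positivity)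
  · have h1 : ‖(t : ℂ) - w‖ ≤ |t - w₀.re| + (|w₀.im| + 2) := by
      have e : (t : ℂ) - w = ((t - w₀.re : ℝ) : ℂ) - (w₀.im : ℝ) * I - (w - w₀) :=
        Complex.ext (by simp) (by simp; ring)
      rw [e]
      refine (norm_sub_le _ _).trans ?_
      have := norm_sub_le ((t - w₀.re : ℝ) : ℂ) ((w₀.im : ℝ) * I)
      rw [norm_mul, norm_I, mul_one, norm_real, norm_real, Real.norm_eq_abs,
        Real.norm_eq_abs] at this
      linarith
    simpa using h1
  · rw [← Real.exp_add, ← Real.exp_add]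
    refine Real.exp_le_exp.2 ?_
    have h1 : w.im ^ 2 ≤ (|w₀.im| + 2) ^ 2 := by
      rw [← sq_abs w.im]
      exact pow_le_pow_left₀ (abs_nonneg _) him' 2
    have h2 : (w.re - w₀.re) ^ 2 ≤ 1 := by
      rw [← sq_abs]
      exact pow_le_one₀ (abs_nonneg _) hre
    nlinarith [sq_nonneg ((t - w.re) - (w.re - w₀.re))]

variable {E : Type*} [NormedAddCommGroup E] [NormedSpace ℂ E] {α : ℝ → E →L[ℂ] E}

lemma IsOneParamRep.integrable_smear (hα : IsOneParamRep α) (w : ℂ) (x : E) :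
    Integrable fun t : ℝ => cexp (-((t : ℂ) - w) ^ 2) • α t x := by
  refine Integrable.mono' ((integrable_gaussKernel w).norm.mul_const ‖x‖)
    (Continuous.aestronglyMeasurable (Continuous.smul (by fun_prop) (hα.strong_cont x)))
    (ae_of_all _ fun t => ?_)
  rw [norm_smul]
  gcongr
  exact hα.norm_apply_le t x

/-- The Gaussian average `∫ exp (-(t - w)²) α_t x dt`, as a bounded operator in `x`. -/
def IsOneParamRep.smear (hα : IsOneParamRep α) (w : ℂ) : E →L[ℂ] E :=
  LinearMap.mkContinuous
    { toFun := fun x => ∫ t : ℝ, cexp (-((t : ℂ) - w) ^ 2) • α t x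
      map_add' := fun x y => by
        rw [← integral_add (hα.integrable_smear w x) (hα.integrable_smear w y)]
        simp
      map_smul' := fun c x => by
        rw [RingHom.id_apply, ← integral_smul]
        simp [smul_comm c] }
    (∫ t : ℝ, ‖cexp (-((t : ℂ) - w) ^ 2)‖) (fun x => by
      rw [← integral_mul_const]
      refine norm_integral_le_of_norm_le ((integrable_gaussKernel w).norm.mul_const ‖x‖)
        (ae_of_all _ fun t => ?_)
      rw [norm_smul]
      gcongr
      exact hα.norm_apply_le t x)

lemma IsOneParamRep.smear_apply (hα : IsOneParamRep α) (w : ℂ) (x : E) :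
    hα.smear w x = ∫ t : ℝ, cexp (-((t : ℂ) - w) ^ 2) • α t x := rfl

lemma IsOneParamRep.smear_ofReal (hα : IsOneParamRep α) (s : ℝ) (x : E) :
    hα.smear s x = hα.smear 0 (α s x) := by
  rw [smear_apply, smear_apply,
    ← integral_add_right_eq_self (fun t : ℝ => cexp (-((t : ℂ) - s) ^ 2) • α t x) s]
  simp [hα.apply_apply]

lemma IsOneParamRep.differentiable_smear (hα : IsOneParamRep α) (x : E) :
    Differentiable ℂ fun w => hα.smear w x := by
  intro w₀
  simp only [smear_apply]
  refine (hasDerivAt_integral_of_dominated_loc_of_deriv_le (𝕜 := ℂ)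
    (F := fun w (t : ℝ) => cexp (-((t : ℂ) - w) ^ 2) • α t x)
    (F' := fun w (t : ℝ) => (2 * ((t : ℂ) - w) * cexp (-((t : ℂ) - w) ^ 2)) • α t x)
    (Metric.closedBall_mem_nhds w₀ one_pos)
    (Eventually.of_forall fun w => (hα.integrable_smear w x).aestronglyMeasurable)
    (hα.integrable_smear w₀ x) ?_ (ae_of_all _ fun t w hw => ?_)
    ((integrable_gaussKernel_deriv_bound w₀.re (|w₀.im| + 2)).mul_const ‖x‖)
    (ae_of_all _ fun t w _ => ?_)).2.differentiableAt
  · exact Continuous.aestronglyMeasurable (Continuous.smul (by fun_prop) (hα.strong_cont x))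
  · rw [norm_smul]
    have h1 := norm_gaussKernel_deriv_le (mem_closedBall_iff_norm.1 hw) t
    exact mul_le_mul h1 (hα.norm_apply_le t x) (norm_nonneg _) ((norm_nonneg _).trans h1)
  · refine HasDerivAt.smul_const ?_ (α t x)
    have h1 : HasDerivAt (fun w : ℂ => -((t : ℂ) - w) ^ 2) (2 * ((t : ℂ) - w)) w := by
      have h := (((hasDerivAt_id' w).const_sub (t : ℂ)).fun_pow 2).fun_neg
      simpa using h
    simpa [mul_comm] using h1.cexp

lemma IsOneParamRep.rescale (hα : IsOneParamRep α) (ε : ℝ) :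
    IsOneParamRep fun t => α (ε * t) where
  map_add s t := by rw [mul_add, hα.map_add]
  map_zero := by rw [mul_zero, hα.map_zero]
  norm_le t := hα.norm_le _
  strong_cont a := (hα.strong_cont a).comp (by fun_prop)

lemma HasContVal.smear_eq (hα : IsOneParamRep α) {ε : ℝ} (hε : ε ≠ 0) {z : ℂ} {a b : E}
    (h : HasContVal α z a b) :
    (hα.rescale ε).smear 0 b = (hα.rescale ε).smear (z / ε) a := by
  obtain ⟨f, hc, hd, hf, rfl⟩ := h
  have hsm : Differentiable ℂ fun w : ℂ => (hα.rescale ε).smear (w / ε) a :=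
    ((hα.rescale ε).differentiable_smear a).comp (by fun_prop)
  refine eqOn_of_eq_on_real (f := fun w => (hα.rescale ε).smear 0 (f w))
    (g := fun w => (hα.rescale ε).smear (w / ε) a)
    (((hα.rescale ε).smear 0).continuous.comp_continuousOn hc)
    (((hα.rescale ε).smear 0).differentiable.comp_differentiableOn hd)
    hsm.continuous.continuousOn hsm.differentiableOn (fun t => ?_) (self_mem_hStrip z)
  rw [hf, ← ofReal_div, IsOneParamRep.smear_ofReal, mul_div_cancel₀ _ hε]

lemma IsOneParamRep.tendsto_smear_rescale [CompleteSpace E] (hα : IsOneParamRep α) (x : E) :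
    Tendsto (fun n : ℕ => (hα.rescale (1 / ((n : ℝ) + 1))).smear 0 x) atTop
      (𝓝 (((√Real.pi : ℝ) : ℂ) • x)) := by
  have hval : ((√Real.pi : ℝ) : ℂ) • x = ∫ t : ℝ, cexp (-((t : ℂ) - 0) ^ 2) • x := by
    rw [integral_smul_const]
    congr 1
    have := integral_gaussian 1
    rw [div_one] at this
    rw [← this, ← integral_complex_ofReal]
    simp
  rw [hval]
  simp only [smear_apply]
  refine tendsto_integral_of_dominated_convergence
    (fun t : ℝ => ‖cexp (-((t : ℂ) - 0) ^ 2)‖ * ‖x‖)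
    (fun n => ((hα.rescale _).integrable_smear 0 x).aestronglyMeasurable)
    ((integrable_gaussKernel 0).norm.mul_const ‖x‖) (fun n => ae_of_all _ fun t => ?_)
    (ae_of_all _ fun t => ?_)
  · rw [norm_smul]
    gcongr
    exact hα.norm_apply_le _ x
  · refine Tendsto.const_smul ?_ _
    have h0 : Tendsto (fun n : ℕ => 1 / ((n : ℝ) + 1) * t) atTop (𝓝 0) := by
      simpa using tendsto_one_div_add_atTop_nhds_zero_nat.mul_const t
    have := ((hα.strong_cont x).tendsto 0).comp h0
    rw [hα.map_zero] at this
    exact this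

end Smearing

lemma Submodule.integral_mem_of_isClosed {F X : Type*} [NormedAddCommGroup F] [NormedSpace ℂ F]
    [CompleteSpace F] {m : MeasurableSpace X} {μ : Measure X} {K : Submodule ℂ F}
    (hK : IsClosed (K : Set F)) {f : X → F} (hf : Integrable f μ) (h : ∀ t, f t ∈ K) :
    ∫ t, f t ∂μ ∈ K := by
  have : IsClosed (K : Set F) := hK
  have hq := K.mkQL.integral_comp_comm hf
  have h0 : ∀ t, K.mkQL (f t) = 0 := fun t => (Submodule.Quotient.mk_eq_zero K).2 (h t)
  simp only [h0, integral_zero] at hq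
  exact (Submodule.Quotient.mk_eq_zero K).1 hq.symm

/-- The graph of the restriction of `α_z` to `C`. -/
def restrictedGraph {E : Type*} [NormedAddCommGroup E] [NormedSpace ℂ E]
    (α : ℝ → E →L[ℂ] E) (z : ℂ) (C : Submodule ℂ E) : Submodule ℂ (E × E) where
  carrier := {p : E × E | p.1 ∈ C ∧ HasContVal α z p.1 p.2}
  add_mem' hp hq := ⟨C.add_mem hp.1 hq.1, hp.2.add hq.2⟩
  zero_mem' := ⟨C.zero_mem, HasContVal.zero z⟩
  smul_mem' c _ hp := ⟨C.smul_mem c hp.1, hp.2.smul c⟩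

/-- If `C` is a dense subspace of `E` contained in `D(α_z)` and invariant under every `α_t`,
then `C` is a core for `α_z`. -/
theorem invariant_core
    {E : Type*} [NormedAddCommGroup E] [NormedSpace ℂ E] [CompleteSpace E]
    {α : ℝ → E →L[ℂ] E} (hα : IsOneParamRep α) (z : ℂ) (C : Submodule ℂ E)
    (hCdom : ∀ x ∈ C, ∃ b, HasContVal α z x b)
    (hCdense : Dense (C : Set E))
    (hCinv : ∀ t : ℝ, ∀ x ∈ C, α t x ∈ C) :
    closure {p : E × E | p.1 ∈ C ∧ HasContVal α z p.1 p.2}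
      = {p : E × E | HasContVal α z p.1 p.2} := by
  refine Subset.antisymm (closure_minimal (fun p hp => hp.2) (hα.isClosed_graph z)) ?_
  rintro ⟨a, b⟩ hab
  set K := (restrictedGraph α z C).topologicalClosure
  have hKc : IsClosed (K : Set (E × E)) := Submodule.isClosed_topologicalClosure _
  change (a, b) ∈ K
  have smear_mem : ∀ ε : ℝ, ε ≠ 0 → ∀ x : E,
      ((hα.rescale ε).smear 0 x, (hα.rescale ε).smear (z / ε) x) ∈ K := by
    intro ε hε
    have hcl : IsClosed {x : E |
        ((hα.rescale ε).smear 0 x, (hα.rescale ε).smear (z / ε) x) ∈ K} :=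
      hKc.preimage (by fun_prop)
    have hsub : (C : Set E) ⊆ {x : E |
        ((hα.rescale ε).smear 0 x, (hα.rescale ε).smear (z / ε) x) ∈ K} := by
      intro x hx
      obtain ⟨y, hy⟩ := hCdom x hx
      rw [mem_ofPred_eq, ← hy.smear_eq hα hε]
      simp only [IsOneParamRep.smear_apply]
      have hi := (hα.rescale ε).integrable_smear 0 x
      have hi' := (hα.rescale ε).integrable_smear 0 y
      rw [← integral_pair hi hi']
      refine Submodule.integral_mem_of_isClosed hKc (hi.prodMk hi') fun t => ?_
      refine K.smul_mem (cexp (-((t : ℂ) - 0) ^ 2)) (x := (α (ε * t) x, α (ε * t) y))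
        (Submodule.le_topologicalClosure _ ⟨hCinv _ x hx, ?_⟩)
      exact hy.map (α (ε * t)) fun s v => by
        rw [hα.apply_apply, hα.apply_apply, add_comm]
    exact fun x => hcl.closure_subset_iff.2 hsub (hCdense x)
  have hlim := (hα.tendsto_smear_rescale a).prodMk_nhds (hα.tendsto_smear_rescale b)
  have hmem : ((√Real.pi : ℝ) : ℂ) • (a, b) ∈ K := by
    refine hKc.mem_of_tendsto hlim (Eventually.of_forall fun n => ?_)
    have hn : 1 / ((n : ℝ) + 1) ≠ 0 := by positivity
    have := smear_mem _ hn a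
    rwa [← HasContVal.smear_eq hα hn hab] at this
  have hpi : ((√Real.pi : ℝ) : ℂ) ≠ 0 :=
    ofReal_ne_zero.2 (Real.sqrt_pos.2 Real.pi_pos).ne'
  exact (K.smul_mem_iff hpi).1 hmem
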